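/- arXiv:2310.15932 — 6 statements merged into one kernel-verified Lean document; each statement's English description precedes it below -/
import Mathlib

section
/- There exists a universal constant K > 0 such that the following holds. Let d, T be positive integers, C₀ > 0, let s₁ ≥ s₂ ≥ … ≥ s_T be real numbers, and let μ_{t,l} ∈ ℝ^d be vectors defined for all 1 ≤ l ≤ t ≤ T. Suppose that for all 1 ≤ t < t′ ≤ T one has Σ_{l=1}^{t} ‖μ_{t,l} − μ_{t′,l}‖₂² ≤ C₀·(s_t − s_{t′}). Then for all 1 ≤ a ≤ b ≤ T, Σ_{t=a}^{b} ‖μ_{t,t} − μ_{b,t}‖₂² ≤ K·C₀·(log(1+b−a))²·(s_a − s_b); in particular Σ_{t=1}^{T} ‖μ_{t,t} − μ_{T,t}‖₂² ≤ K·C₀·(log(1+T))²·(s₁ − s_T). -/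
open scoped BigOperators

/-!
Cut `[a, b]` at its midpoint `m`. For `t ≤ m` go from `μ t t` to `μ b t` through `μ m t`: the first
leg is an instance of the problem on `[a, m]`, and the second is controlled by the hypothesis for
the single pair `(m, b)`. For `t > m` we are left with the problem on `[m + 1, b]`. A weighted
Young inequality, with weight `k + 1` when halving a window of length at most `2 ^ (k + 1)`, loses
only a factor `(k + 2) / (k + 1)` on the recursive term. These factors telescope: a window of
length at most `2 ^ k` has drift at most `k (k + 1)` times the decrease of the potential.
-/

open Finset

lemma dist_sq_le_weighted {X : Type*} [PseudoMetricSpace X] (x y z : X) {c : ℝ} (hc : 0 < c) :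
    dist x z ^ 2 ≤ (1 + c⁻¹) * dist x y ^ 2 + (1 + c) * dist y z ^ 2 := by
  have young : 2 * dist y z * dist x y ≤ c * dist y z ^ 2 + c⁻¹ * dist x y ^ 2 :=
    two_mul_le_add_mul_sq hc
  calc dist x z ^ 2 ≤ (dist x y + dist y z) ^ 2 := by gcongr; exact dist_triangle x y z
    _ ≤ (1 + c⁻¹) * dist x y ^ 2 + (1 + c) * dist y z ^ 2 := by linarith

lemma clog_mul_clog_add_one_le_logb_sq (n : ℕ) :
    (Nat.clog 2 n : ℝ) * (Nat.clog 2 n + 1) ≤ 6 * Real.logb 2 n ^ 2 := by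
  rcases le_or_gt n 1 with hn | hn
  · simp only [Nat.clog_of_right_le_one hn, CharP.cast_eq_zero, zero_mul]
    positivity
  have one_le_logb : 1 ≤ Real.logb 2 n := by
    rw [Real.le_logb_iff_rpow_le one_lt_two (by positivity), Real.rpow_one]
    exact_mod_cast hn
  have clog_le : (Nat.clog 2 n : ℝ) ≤ Real.logb 2 n + 1 := by
    rw [← Real.natCeil_logb_natCast]
    exact_mod_cast (Nat.ceil_lt_add_one (zero_le_one.trans one_le_logb)).le
  calc (Nat.clog 2 n : ℝ) * (Nat.clog 2 n + 1)
      ≤ (2 * Real.logb 2 n) * (3 * Real.logb 2 n) := by gcongr <;> linarith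
    _ = 6 * Real.logb 2 n ^ 2 := by ring

section Drift

variable {X : Type*} [PseudoMetricSpace X] {μ : ℕ → ℕ → X} {φ : ℕ → ℝ} {a b m : ℕ}

/-- The standing hypothesis of the halving argument on the window `[a, b]`: the rows `μ t` and
`μ t'` differ on `[a, t]` by at most the decrease of the potential `φ` from `t` to `t'`. Starting
the sum at `a` makes the condition inherited by subwindows; the constant `C₀` is part of `φ`. -/
def DriftBoundedOn (μ : ℕ → ℕ → X) (φ : ℕ → ℝ) (a b : ℕ) : Prop :=
  ∀ ⦃t t' : ℕ⦄, a ≤ t → t < t' → t' ≤ b →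
    ∑ l ∈ Icc a t, dist (μ t l) (μ t' l) ^ 2 ≤ φ t - φ t'

/-- The total squared drift of the diagonal entries `μ t t`, `t ∈ [a, b]`, from the corresponding
entries `μ b t` of the final row: the quantity estimated by halving `[a, b]`. -/
def diagonalDrift (μ : ℕ → ℕ → X) (a b : ℕ) : ℝ :=
  ∑ t ∈ Icc a b, dist (μ t t) (μ b t) ^ 2

@[simp]
lemma diagonalDrift_self (μ : ℕ → ℕ → X) (a : ℕ) : diagonalDrift μ a a = 0 := by
  simp [diagonalDrift]

namespace DriftBoundedOn

lemma mono {a' b' : ℕ} (h : DriftBoundedOn μ φ a b) (ha : a ≤ a') (hb : b' ≤ b) :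
    DriftBoundedOn μ φ a' b' := fun _ _ hat htt' htb ↦
  (sum_le_sum_of_subset_of_nonneg (Icc_subset_Icc_left ha) fun _ _ _ ↦ sq_nonneg _).trans
    (h (ha.trans hat) htt' (htb.trans hb))

lemma antitoneOn (h : DriftBoundedOn μ φ a b) : AntitoneOn φ (Set.Icc a b) := by
  rintro t ⟨hat, -⟩ t' ⟨-, htb⟩ htt'
  rcases htt'.eq_or_lt with rfl | hlt
  · rfl
  · exact sub_nonneg.1 ((sum_nonneg fun _ _ ↦ sq_nonneg _).trans (h hat hlt htb))

lemma diagonalDrift_le_of_split (h : DriftBoundedOn μ φ a b) (ham : a ≤ m) (hmb : m < b)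
    {c : ℝ} (hc : 0 < c) :
    diagonalDrift μ a b ≤
      (1 + c⁻¹) * diagonalDrift μ a m + (1 + c) * (φ m - φ b) + diagonalDrift μ (m + 1) b := by
  have split : diagonalDrift μ a b =
      ∑ t ∈ Icc a m, dist (μ t t) (μ b t) ^ 2 + diagonalDrift μ (m + 1) b := by
    simp only [diagonalDrift, ← Ico_add_one_right_eq_Icc]
    exact (sum_Ico_consecutive _ (by omega) (by omega)).symm
  have left_half : ∑ t ∈ Icc a m, dist (μ t t) (μ b t) ^ 2 ≤
      (1 + c⁻¹) * diagonalDrift μ a m + (1 + c) * (φ m - φ b) :=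
    calc ∑ t ∈ Icc a m, dist (μ t t) (μ b t) ^ 2
        ≤ ∑ t ∈ Icc a m,
            ((1 + c⁻¹) * dist (μ t t) (μ m t) ^ 2 + (1 + c) * dist (μ m t) (μ b t) ^ 2) :=
          sum_le_sum fun t _ ↦ dist_sq_le_weighted _ (μ m t) _ hc
      _ = (1 + c⁻¹) * diagonalDrift μ a m +
            (1 + c) * ∑ t ∈ Icc a m, dist (μ m t) (μ b t) ^ 2 := by
          rw [sum_add_distrib, ← mul_sum, ← mul_sum, diagonalDrift]
      _ ≤ (1 + c⁻¹) * diagonalDrift μ a m + (1 + c) * (φ m - φ b) := by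
          gcongr
          exact h ham hmb le_rfl
  rw [split]
  gcongr

lemma diagonalDrift_le_of_length_le_two_pow {k : ℕ} (h : DriftBoundedOn μ φ a b) (hab : a ≤ b)
    (hk : b + 1 ≤ a + 2 ^ k) :
    diagonalDrift μ a b ≤ k * (k + 1) * (φ a - φ b) := by
  induction k generalizing a b with
  | zero =>
    obtain rfl : a = b := by omega
    simp
  | succ k ih =>
    rcases hab.eq_or_lt with rfl | hlt
    · simp
    rw [pow_succ] at hk
    obtain ⟨m, ham, hmb, hleft, hright⟩ :
        ∃ m, a ≤ m ∧ m < b ∧ m + 1 ≤ a + 2 ^ k ∧ b + 1 ≤ m + 1 + 2 ^ k :=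
      ⟨(a + b) / 2, by omega, by omega, by omega, by omega⟩
    have left_le : diagonalDrift μ a m ≤ k * (k + 1) * (φ a - φ m) :=
      ih (h.mono le_rfl hmb.le) ham hleft
    have right_le : diagonalDrift μ (m + 1) b ≤ k * (k + 1) * (φ (m + 1) - φ b) :=
      ih (h.mono (by omega) le_rfl) hmb hright
    have φ_le_left : φ m ≤ φ a := h.antitoneOn ⟨le_rfl, hab⟩ ⟨ham, hmb.le⟩ ham
    have φ_succ_le : φ (m + 1) ≤ φ m :=
      h.antitoneOn ⟨ham, hmb.le⟩ ⟨by omega, hmb⟩ m.le_succ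
    have φ_le_right : φ b ≤ φ m := h.antitoneOn ⟨ham, hmb.le⟩ ⟨hab, le_rfl⟩ hmb.le
    calc diagonalDrift μ a b
        ≤ (1 + (k + 1 : ℝ)⁻¹) * diagonalDrift μ a m + (1 + (k + 1)) * (φ m - φ b) +
            diagonalDrift μ (m + 1) b := h.diagonalDrift_le_of_split ham hmb (by positivity)
      _ ≤ (1 + (k + 1 : ℝ)⁻¹) * (k * (k + 1) * (φ a - φ m)) + (1 + (k + 1)) * (φ m - φ b) +
            k * (k + 1) * (φ m - φ b) := by
          gcongr
          exact right_le.trans (by gcongr)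
      _ = k * (k + 2) * (φ a - φ m) + (k * (k + 1) + (k + 2)) * (φ m - φ b) := by
          field_simp
          ring
      _ ≤ (k + 1) * (k + 2) * (φ a - φ m) + (k + 1) * (k + 2) * (φ m - φ b) := by
          gcongr <;> linarith
      _ = ↑(k + 1) * (↑(k + 1) + 1) * (φ a - φ b) := by
          push_cast
          ring

lemma diagonalDrift_le_log_sq (h : DriftBoundedOn μ φ a b) (hab : a ≤ b) :
    diagonalDrift μ a b ≤
      6 / Real.log 2 ^ 2 * Real.log (1 + (b : ℝ) - (a : ℝ)) ^ 2 * (φ a - φ b) := by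
  have length_le : 1 + b - a ≤ 2 ^ Nat.clog 2 (1 + b - a) := Nat.le_pow_clog one_lt_two _
  have φ_le : φ b ≤ φ a := h.antitoneOn ⟨le_rfl, hab⟩ ⟨hab, le_rfl⟩ hab
  have cast_length : ((1 + b - a : ℕ) : ℝ) = 1 + (b : ℝ) - (a : ℝ) := by
    rw [Nat.cast_sub (by omega), Nat.cast_add, Nat.cast_one]
  calc diagonalDrift μ a b
      ≤ Nat.clog 2 (1 + b - a) * (Nat.clog 2 (1 + b - a) + 1) * (φ a - φ b) :=
        h.diagonalDrift_le_of_length_le_two_pow hab (by omega)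
    _ ≤ 6 * Real.logb 2 (1 + b - a : ℕ) ^ 2 * (φ a - φ b) := by
        exact mul_le_mul_of_nonneg_right (clog_mul_clog_add_one_le_logb_sq _) (sub_nonneg.2 φ_le)
    _ = 6 / Real.log 2 ^ 2 * Real.log (1 + (b : ℝ) - (a : ℝ)) ^ 2 * (φ a - φ b) := by
        rw [cast_length, Real.logb]
        ring

end DriftBoundedOn

theorem recursive_halving_bound_general {T : ℕ} (hT : 0 < T) {C₀ : ℝ} {s : ℕ → ℝ}
    (hμ : ∀ t t', 1 ≤ t → t < t' → t' ≤ T →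
      ∑ l ∈ Icc 1 t, dist (μ t l) (μ t' l) ^ 2 ≤ C₀ * (s t - s t')) :
    (∀ a b, 1 ≤ a → a ≤ b → b ≤ T →
      ∑ t ∈ Icc a b, dist (μ t t) (μ b t) ^ 2 ≤
        6 / Real.log 2 ^ 2 * C₀ * Real.log (1 + (b : ℝ) - (a : ℝ)) ^ 2 * (s a - s b)) ∧
    ∑ t ∈ Icc 1 T, dist (μ t t) (μ T t) ^ 2 ≤
      6 / Real.log 2 ^ 2 * C₀ * Real.log (1 + (T : ℝ)) ^ 2 * (s 1 - s T) := by
  have drift : DriftBoundedOn μ (fun t ↦ C₀ * s t) 1 T := fun t t' ht htt' ht' ↦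
    (hμ t t' ht htt' ht').trans_eq (mul_sub _ _ _)
  refine ⟨fun a b ha hab hb ↦ ?_, ?_⟩
  · exact ((drift.mono ha hb).diagonalDrift_le_log_sq hab).trans_eq (by ring)
  have one_le : (1 : ℝ) ≤ T := by exact_mod_cast hT
  have decrease : C₀ * s T ≤ C₀ * s 1 := drift.antitoneOn ⟨le_rfl, hT⟩ ⟨hT, le_rfl⟩ hT
  calc diagonalDrift μ 1 T
      ≤ 6 / Real.log 2 ^ 2 * Real.log (1 + (T : ℝ) - (1 : ℕ)) ^ 2 * (C₀ * s 1 - C₀ * s T) :=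
        drift.diagonalDrift_le_log_sq hT
    _ ≤ 6 / Real.log 2 ^ 2 * Real.log (1 + (T : ℝ)) ^ 2 * (C₀ * s 1 - C₀ * s T) := by
        have log_nonneg : 0 ≤ Real.log (1 + (T : ℝ) - (1 : ℕ)) :=
          Real.log_nonneg (by push_cast; linarith)
        gcongr
        all_goals push_cast; linarith
    _ = 6 / Real.log 2 ^ 2 * C₀ * Real.log (1 + (T : ℝ)) ^ 2 * (s 1 - s T) := by ring

end Drift

/-- The recursive halving inequality underlying the analysis of the online filter: if the
pairwise aggregated differences of the vectors `μ t l` are controlled by the decrease of a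
monotone sequence `s`, then the per-round outputs `μ t t` cannot drift far from the
final-round values `μ b t`, up to a squared-logarithmic factor. -/
theorem recursive_halving_bound :
    ∃ K : ℝ, 0 < K ∧
      ∀ (d T : ℕ), 0 < d → 0 < T →
      ∀ C₀ : ℝ, 0 < C₀ →
      ∀ s : ℕ → ℝ, (∀ t t', 1 ≤ t → t ≤ t' → t' ≤ T → s t' ≤ s t) →
      ∀ μ : ℕ → ℕ → EuclideanSpace ℝ (Fin d),
        (∀ t t', 1 ≤ t → t < t' → t' ≤ T →
          ∑ l ∈ Finset.Icc 1 t, ‖μ t l - μ t' l‖ ^ 2 ≤ C₀ * (s t - s t')) →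
        (∀ a b, 1 ≤ a → a ≤ b → b ≤ T →
          ∑ t ∈ Finset.Icc a b, ‖μ t t - μ b t‖ ^ 2 ≤
            K * C₀ * (Real.log (1 + (b : ℝ) - (a : ℝ))) ^ 2 * (s a - s b)) ∧
        (∑ t ∈ Finset.Icc 1 T, ‖μ t t - μ T t‖ ^ 2 ≤
            K * C₀ * (Real.log (1 + (T : ℝ))) ^ 2 * (s 1 - s T)) := by
  refine ⟨6 / Real.log 2 ^ 2, by positivity, fun d T _ hT C₀ _ s _ μ hμ ↦ ?_⟩
  simp only [← dist_eq_norm] at hμ ⊢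
  exact recursive_halving_bound_general hT hμ
end

section
/- There exist universal constants ε₀ ∈ (0,1) and c > 0 such that the following holds. Let ε ∈ (0, ε₀), γ ∈ (0,1), T ≥ 1 an integer, and μ* ∈ [γ/4, 3γ/4]. Let S be a finite set partitioned into an adversarial subset A and a clean subset S∖A, with binary labels x_j ∈ {0,1} for j ∈ S, and suppose S_L := {j ∈ S : x_j = 1} and S_R := {j ∈ S : x_j = 0} are both nonempty. Define ε_S = |A|/|S|, μ̂ = (1/|S∖A|) Σ_{j∈S∖A} x_j, μ̃ = (1/|S|) Σ_{j∈S} x_j, μ̄ = min(γ, μ̃), ε_L = |A∩S_L|/|S_L|, ε_R = |A∩S_R|/|S_R|. Assume ε_S ≤ 10ε, |μ̂ − μ*| ≤ min(ε,γ)/T, and η := |μ̄ − μ*| ≥ 2·min(ε,γ)/T. Then: if |S_L|/|S| ≤ 5γ, we have |ε_L − ε_R| ≥ c·η·|S|/|S_L|; and if |S_L|/|S| > 5γ, we have |ε_L − ε_R| ≥ c. -/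
open scoped BigOperators Classical

/-!
Draw a uniform sample from the group `S`. The covariance of the events `A` (adversarial) and `L`
(label 1) can be computed by conditioning on either of them: conditioning on `L` expresses it
through the gap `ε_L - ε_R` between the child densities, conditioning on `A` through the shift
`μ̃ - μ̂` that the adversary imposes on the mean. When at least half of `S` is clean, the gap is
therefore at least `|μ̃ - μ̂| * |S| / (2 * |S_L|)`. A bad estimate `μ̄` forces a large shift, because
capping at `γ ≥ μ*` only moves the estimate closer to `μ*`.
-/

section RelDensity

variable {ι : Type*} [DecidableEq ι] {S A B L : Finset ι}

/-- The fraction of the elements of `S` that lie in `A`, i.e. the conditional probability of `A`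
given `S` under counting measure. `A` need not be a subset of `S`; the value is `0` if `S = ∅`. -/
noncomputable def relDensity (A S : Finset ι) : ℝ :=
  ((A ∩ S).card : ℝ) / (S.card : ℝ)

theorem relDensity_of_subset (h : A ⊆ S) : relDensity A S = (A.card : ℝ) / (S.card : ℝ) := by
  rw [relDensity, Finset.inter_eq_left.2 h]

theorem relDensity_nonneg (A S : Finset ι) : 0 ≤ relDensity A S := by
  unfold relDensity
  positivity

theorem relDensity_pos (hA : A.Nonempty) (h : A ⊆ S) : 0 < relDensity A S := by
  rw [relDensity_of_subset h]
  exact div_pos (Nat.cast_pos.2 hA.card_pos) (Nat.cast_pos.2 (hA.mono h).card_pos)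

theorem relDensity_le_one (A S : Finset ι) : relDensity A S ≤ 1 :=
  div_le_one_of_le₀ (Nat.cast_le.2 (Finset.card_le_card Finset.inter_subset_right))
    (Nat.cast_nonneg _)

theorem relDensity_self (hS : S.Nonempty) : relDensity S S = 1 := by
  rw [relDensity_of_subset subset_rfl, div_self (Nat.cast_ne_zero.2 hS.card_ne_zero)]

theorem relDensity_mul_relDensity (A : Finset ι) (h : B ⊆ S) :
    relDensity A B * relDensity B S = relDensity (A ∩ B) S := by
  rw [relDensity_of_subset h, relDensity_of_subset (Finset.inter_subset_right.trans h), relDensity,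
    ← mul_div_assoc, div_mul_cancel_of_imp]
  intro hB
  have B_empty : B = ∅ := Finset.card_eq_zero.1 (Nat.cast_eq_zero.1 hB)
  simp [B_empty]

theorem relDensity_inter_add_inter_sdiff (A B S : Finset ι) :
    relDensity (A ∩ B) S + relDensity (A ∩ (S \ B)) S = relDensity A S := by
  have inter : A ∩ B ∩ S = A ∩ S ∩ B := Finset.inter_right_comm A B S
  have sdiff : A ∩ (S \ B) ∩ S = (A ∩ S) \ B := by grind
  rw [relDensity, relDensity, relDensity, ← add_div, inter, sdiff, ← Nat.cast_add,
    Finset.card_inter_add_card_sdiff]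

theorem relDensity_add_relDensity_sdiff (h : A ⊆ S) (hS : S.Nonempty) :
    relDensity A S + relDensity (S \ A) S = 1 := by
  rw [← relDensity_self hS, ← relDensity_inter_add_inter_sdiff S A S,
    Finset.inter_eq_right.2 h, Finset.inter_eq_right.2 Finset.sdiff_subset]

theorem relDensity_gap_mul_eq_covariance (A : Finset ι) (hL : L ⊆ S) (hS : S.Nonempty) :
    (relDensity A L - relDensity A (S \ L)) * (relDensity L S * relDensity (S \ L) S) =
      relDensity (A ∩ L) S - relDensity A S * relDensity L S := by
  have left := relDensity_mul_relDensity A hL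
  have right := relDensity_mul_relDensity A (Finset.sdiff_subset (s := S) (t := L))
  have total := relDensity_inter_add_inter_sdiff A L S
  have compl := relDensity_add_relDensity_sdiff hL hS
  linear_combination relDensity (S \ L) S * left - relDensity L S * right
    - relDensity L S * total + relDensity (A ∩ L) S * compl

theorem relDensity_shift_mul_eq_covariance (L : Finset ι) (hA : A ⊆ S) (hS : S.Nonempty) :
    (relDensity L S - relDensity L (S \ A)) * relDensity (S \ A) S =
      relDensity (A ∩ L) S - relDensity A S * relDensity L S := by
  have clean := relDensity_mul_relDensity L (Finset.sdiff_subset (s := S) (t := A))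
  have total := relDensity_inter_add_inter_sdiff L A S
  have compl := relDensity_add_relDensity_sdiff hA hS
  rw [Finset.inter_comm A L]
  linear_combination relDensity L S * compl - clean - total

theorem abs_relDensity_shift_mul_le_abs_gap_mul (hA : A ⊆ S) (hL : L ⊆ S) (hS : S.Nonempty) :
    |relDensity L S - relDensity L (S \ A)| * relDensity (S \ A) S ≤
      |relDensity A L - relDensity A (S \ L)| * relDensity L S :=
  calc |relDensity L S - relDensity L (S \ A)| * relDensity (S \ A) S
      = |relDensity A L - relDensity A (S \ L)| * (relDensity L S * relDensity (S \ L) S) := by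
        rw [← abs_of_nonneg (relDensity_nonneg (S \ A) S), ← abs_mul,
          relDensity_shift_mul_eq_covariance L hA hS, ← relDensity_gap_mul_eq_covariance A hL hS,
          abs_mul, abs_of_nonneg (mul_nonneg (relDensity_nonneg L S) (relDensity_nonneg _ S))]
    _ ≤ |relDensity A L - relDensity A (S \ L)| * relDensity L S := by
        gcongr
        exact mul_le_of_le_one_right (relDensity_nonneg L S) (relDensity_le_one _ S)

theorem half_abs_relDensity_shift_le_abs_gap_mul (hA : A ⊆ S) (hL : L ⊆ S) (hS : S.Nonempty)
    (hAS : relDensity A S ≤ 1 / 2) :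
    |relDensity L S - relDensity L (S \ A)| / 2 ≤
      |relDensity A L - relDensity A (S \ L)| * relDensity L S := by
  refine le_trans ?_ (abs_relDensity_shift_mul_le_abs_gap_mul hA hL hS)
  have clean : 1 / 2 ≤ relDensity (S \ A) S := by
    linarith [relDensity_add_relDensity_sdiff hA hS]
  rw [div_eq_mul_one_div]
  gcongr

end RelDensity

section CappedEstimate

variable {γ μ mean clean : ℝ}

theorem abs_min_sub_le_abs_sub (hμ : μ ≤ γ) : |min γ mean - μ| ≤ |mean - μ| := by
  simpa only [min_comm γ mean, min_eq_left hμ] using abs_inf_sub_inf_le_abs mean μ γ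

theorem half_abs_min_sub_le_abs_sub (hμ : μ ≤ γ)
    (hclean : |clean - μ| ≤ |min γ mean - μ| / 2) :
    |min γ mean - μ| / 2 ≤ |mean - clean| := by
  linarith [abs_min_sub_le_abs_sub (mean := mean) hμ, abs_sub_le mean clean μ]

theorem clean_le_cap_of_cap_le_mean (hμ : μ ≤ γ) (hmean : γ ≤ mean)
    (hclean : |clean - μ| ≤ |min γ mean - μ| / 2) : clean ≤ γ := by
  rw [min_eq_left hmean, abs_of_nonneg (sub_nonneg.2 hμ)] at hclean
  linarith [le_abs_self (clean - μ)]

end CappedEstimate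

section BinaryLabels

variable {ι : Type*} [DecidableEq ι] {S B : Finset ι} {x : ι → ℝ}

theorem mean_eq_relDensity_filter (hB : B ⊆ S) (hx : ∀ j ∈ B, x j = 0 ∨ x j = 1) :
    1 / (B.card : ℝ) * ∑ j ∈ B, x j = relDensity (S.filter fun j => x j = 1) B := by
  have sum_eq : ∑ j ∈ B, x j = ((B.filter fun j => x j = 1).card : ℝ) := by
    rw [Finset.natCast_card_filter]
    refine Finset.sum_congr rfl fun j hj => ?_
    rcases hx j hj with h | h <;> simp [h]
  have filter_eq : S.filter (fun j => x j = 1) ∩ B = B.filter fun j => x j = 1 := by grind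
  rw [relDensity, filter_eq, sum_eq, one_div_mul_eq_div]

theorem filter_eq_zero_eq_sdiff (hx : ∀ j ∈ S, x j = 0 ∨ x j = 1) :
    S.filter (fun j => x j = 0) = S \ S.filter fun j => x j = 1 := by
  rw [← Finset.filter_not]
  refine Finset.filter_congr fun j hj => ?_
  rcases hx j hj with h | h <;> simp [h]

end BinaryLabels

theorem uneven_adversarial_split_general {ι : Type*} [DecidableEq ι] {S A SL SR : Finset ι}
    {x : ι → ℝ} {γ μstar μhat μbar η : ℝ}
    (hμstar : μstar ≤ γ) (hA : A ⊆ S) (hx : ∀ j ∈ S, x j = 0 ∨ x j = 1)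
    (hSL : SL = S.filter fun j => x j = 1) (hSR : SR = S.filter fun j => x j = 0)
    (hSL_nonempty : SL.Nonempty)
    (hμhat : μhat = 1 / ((S \ A).card : ℝ) * ∑ j ∈ S \ A, x j)
    (hμbar : μbar = min γ (1 / (S.card : ℝ) * ∑ j ∈ S, x j))
    (hη : η = |μbar - μstar|)
    (hεS : (A.card : ℝ) / (S.card : ℝ) ≤ 1 / 2) (hclean : |μhat - μstar| ≤ η / 2) :
    1 / 4 * η * (S.card : ℝ) / (SL.card : ℝ) ≤
        |((A ∩ SL).card : ℝ) / (SL.card : ℝ) - ((A ∩ SR).card : ℝ) / (SR.card : ℝ)| ∧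
      (5 * γ < (SL.card : ℝ) / (S.card : ℝ) →
        2 / 5 ≤ |((A ∩ SL).card : ℝ) / (SL.card : ℝ) - ((A ∩ SR).card : ℝ) / (SR.card : ℝ)|) := by
  have hSLS : SL ⊆ S := hSL ▸ Finset.filter_subset _ S
  have hSR' : SR = S \ SL := by rw [hSR, hSL, filter_eq_zero_eq_sdiff hx]
  rw [mean_eq_relDensity_filter Finset.sdiff_subset fun j hj => hx j (Finset.sdiff_subset hj),
    ← hSL] at hμhat
  rw [mean_eq_relDensity_filter subset_rfl hx, ← hSL] at hμbar
  rw [← relDensity_of_subset hA] at hεS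
  subst hη hμbar hμhat hSR'
  have gap_large :=
    half_abs_relDensity_shift_le_abs_gap_mul hA hSLS (hSL_nonempty.mono hSLS) hεS
  have hpos := relDensity_pos hSL_nonempty hSLS
  rw [← relDensity, ← relDensity, ← relDensity_of_subset hSLS, ← div_div_eq_mul_div,
    ← relDensity_of_subset hSLS]
  refine ⟨?_, fun hγ => ?_⟩
  · rw [div_le_iff₀ hpos]
    linarith [half_abs_min_sub_le_abs_sub hμstar hclean]
  · have clean_le := clean_le_cap_of_cap_le_mean hμstar (by linarith) hclean
    refine le_of_mul_le_mul_right ?_ hpos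
    linarith [le_abs_self (relDensity SL S - relDensity SL (S \ A))]

/-- If a group estimate is far from the true mean, the adversarial samples must be split very
unevenly between the two child groups. Here `S` is a group with adversarial subset `A`,
binary labels `x j ∈ {0,1}` split it into `S_L` (label 1) and `S_R` (label 0), `μ̂` is the
clean empirical mean, `μ̄` the `γ`-capped group mean, and `ε_L, ε_R` the adversarial
densities of the child groups. -/
theorem uneven_adversarial_split :
    ∃ ε₀ c : ℝ, ε₀ ∈ Set.Ioo (0 : ℝ) 1 ∧ 0 < c ∧
      ∀ (ι : Type) (S A : Finset ι) (x : ι → ℝ) (ε γ μstar : ℝ) (T : ℕ),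
        0 < ε → ε < ε₀ → γ ∈ Set.Ioo (0 : ℝ) 1 → 1 ≤ T →
        μstar ∈ Set.Icc (γ / 4) (3 * γ / 4) →
        A ⊆ S →
        (∀ j ∈ S, x j = 0 ∨ x j = 1) →
        ∀ SL SR : Finset ι,
          SL = S.filter (fun j => x j = 1) →
          SR = S.filter (fun j => x j = 0) →
          SL.Nonempty → SR.Nonempty →
        ∀ εS μhat μtilde μbar εL εR η : ℝ,
          εS = (A.card : ℝ) / (S.card : ℝ) →
          μhat = (1 / (((S \ A).card : ℝ))) * ∑ j ∈ S \ A, x j →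
          μtilde = (1 / (S.card : ℝ)) * ∑ j ∈ S, x j →
          μbar = min γ μtilde →
          εL = ((A ∩ SL).card : ℝ) / (SL.card : ℝ) →
          εR = ((A ∩ SR).card : ℝ) / (SR.card : ℝ) →
          η = |μbar - μstar| →
          εS ≤ 10 * ε →
          |μhat - μstar| ≤ min ε γ / T →
          2 * min ε γ / T ≤ η →
          (((SL.card : ℝ) / (S.card : ℝ) ≤ 5 * γ →
              c * η * (S.card : ℝ) / (SL.card : ℝ) ≤ |εL - εR|) ∧
           (5 * γ < (SL.card : ℝ) / (S.card : ℝ) →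
              c ≤ |εL - εR|)) := by
  refine ⟨1 / 20, 1 / 4, by norm_num, by norm_num, ?_⟩
  rintro ι S A x ε γ μstar T - hε - - hμstar hA hx SL SR hSL hSR hSL_nonempty -
    εS μhat μtilde μbar εL εR η rfl hμhat rfl hμbar rfl rfl hη hεS hclean hη_large
  rw [mul_div_assoc] at hη_large
  obtain ⟨gap_ge, gap_ge_of_large⟩ := uneven_adversarial_split_general
    (by linarith [hμstar.1, hμstar.2]) hA hx hSL hSR hSL_nonempty hμhat hμbar hη
    (by linarith) (by linarith)
  exact ⟨fun _ => gap_ge, fun hγ => by linarith [gap_ge_of_large hγ]⟩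
end

section
/- There exist constants C > 0 and ε₀ ∈ (0,1) such that for all ε ∈ (0, ε₀) the following holds. Define F : [0, ∞) → [0,1] by F(q) = 1 for 0 ≤ q < √ε and F(q) = exp(−(q − √ε)²/2) for q ≥ √ε. Then ∫₀^∞ min(ε, √(ε · F(q))) dq ≤ C · ε · √(log(1/ε)). -/
open MeasureTheory

/-!
Put `L = log (1 / ε)` and let `m` be the mean bound. Above `m`, the function `√(ε F(q))` is the
Gaussian `√ε exp(-(q - m)² / 4)`, which falls below `ε` exactly at `q = m + √(2L)`. Bounding the
minimum by `ε` before that point and by the Gaussian after it gives `ε (m + √(2L) + √π)`. When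
`m = √ε`, the terms `m` and `√π` are bounded, and hence `O(√L)` as long as `ε` stays away from `1`.
-/

section

open Real Set

lemma integral_min_const_le {α : Type*} [MeasurableSpace α] {μ : Measure α} {f : α → ℝ}
    {s : Set α} {c : ℝ} (hs : MeasurableSet s) (hμs : μ s ≠ ⊤) (hc : 0 ≤ c) (hf₀ : 0 ≤ᵐ[μ] f)
    (hf : IntegrableOn f sᶜ μ) :
    ∫ x, min c (f x) ∂μ ≤ μ.real s * c + ∫ x in sᶜ, f x ∂μ := by
  classical
  have hconst : IntegrableOn (fun _ ↦ c) s μ := integrableOn_const hμs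
  calc ∫ x, min c (f x) ∂μ
      ≤ ∫ x, s.piecewise (fun _ ↦ c) f x ∂μ := by
        refine integral_mono_of_nonneg ?_ (Integrable.piecewise hs hconst hf)
          (.of_forall fun x ↦ ?_)
        · filter_upwards [hf₀] with x hx using le_min hc hx
        · by_cases hx : x ∈ s <;> simp [hx]
    _ = μ.real s * c + ∫ x in sᶜ, f x ∂μ := by
        rw [integral_piecewise hs hconst hf, setIntegral_const, smul_eq_mul]

lemma integrable_exp_neg_mul_sub_sq {b : ℝ} (hb : 0 < b) (m : ℝ) :
    Integrable fun q ↦ exp (-b * (q - m) ^ 2) :=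
  (integrable_exp_neg_mul_sq hb).comp_sub_right m

lemma setIntegral_Ioi_exp_neg_mul_sub_sq_le {a b : ℝ} (ha : 0 ≤ a) (hb : 0 < b) (m : ℝ) :
    ∫ q in Ioi (m + a), exp (-b * (q - m) ^ 2) ≤ exp (-b * a ^ 2) * (√(π / b) / 2) := by
  have translate : ∫ q in Ioi (m + a), exp (-b * (q - m) ^ 2) =
      ∫ u in Ioi 0, exp (-b * (u + (m + a) - m) ^ 2) := by
    rw [← (measurePreserving_add_right volume (m + a)).setIntegral_preimage_emb
      (measurableEmbedding_addRight (m + a)), preimage_add_const_Ioi, sub_self]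
  calc ∫ q in Ioi (m + a), exp (-b * (q - m) ^ 2)
      = ∫ u in Ioi 0, exp (-b * (u + (m + a) - m) ^ 2) := translate
    _ ≤ ∫ u in Ioi 0, exp (-b * a ^ 2) * exp (-b * u ^ 2) := by
        refine setIntegral_mono_on
          ((integrable_exp_neg_mul_sub_sq hb m).comp_add_right (m + a)).integrableOn
          ((integrable_exp_neg_mul_sq hb).const_mul _).integrableOn measurableSet_Ioi
          fun u hu ↦ ?_
        have hsq : a ^ 2 + u ^ 2 ≤ (u + (m + a) - m) ^ 2 := by
          nlinarith [mul_nonneg ha (mem_Ioi.mp hu).le]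
        rw [← exp_add, exp_le_exp]
        nlinarith
    _ = exp (-b * a ^ 2) * (√(π / b) / 2) := by
        rw [integral_const_mul, integral_gaussian_Ioi]

/-- The error integral `Q_{F,ε} = ∫₀^∞ min(ε, √(ε F(q))) dq` of a tail-bound function `F`. -/
noncomputable def errorIntegral (F : ℝ → ℝ) (ε : ℝ) : ℝ :=
  ∫ q in Ioi 0, min ε √(ε * F q)

lemma errorIntegral_congr {F G : ℝ → ℝ} (h : EqOn F G (Ioi 0)) (ε : ℝ) :
    errorIntegral F ε = errorIntegral G ε :=
  setIntegral_congr_fun measurableSet_Ioi fun q hq ↦ by simp only [h hq]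

lemma errorIntegral_le_mul_add_setIntegral {F : ℝ → ℝ} {ε T : ℝ} (hε : 0 ≤ ε) (hT : 0 ≤ T)
    (hF : IntegrableOn (fun q ↦ √(ε * F q)) (Ioi T)) :
    errorIntegral F ε ≤ T * ε + ∫ q in Ioi T, √(ε * F q) := by
  have hμ : volume.restrict (Ioi 0) (Iic T) = ENNReal.ofReal T := by
    rw [Measure.restrict_apply measurableSet_Iic, Iic_inter_Ioi, Real.volume_Ioc, sub_zero]
  have hcompl : (volume.restrict (Ioi 0)).restrict (Iic T)ᶜ = volume.restrict (Ioi T) := by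
    rw [compl_Iic, Measure.restrict_restrict measurableSet_Ioi,
      inter_eq_left.mpr (Ioi_subset_Ioi hT)]
  have h := integral_min_const_le measurableSet_Iic (hμ.trans_ne ENNReal.ofReal_ne_top) hε
    (.of_forall fun q ↦ sqrt_nonneg (ε * F q)) (by rwa [IntegrableOn, hcompl])
  rwa [measureReal_def, hμ, ENNReal.toReal_ofReal hT, hcompl] at h

/-- The tail-bound function `F` of a subgaussian distribution with unit variance and mean at most
`m`, extended to the whole line by the value `1` on `(-∞, m)`. -/
noncomputable def subgaussianTail (m q : ℝ) : ℝ :=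
  if q < m then 1 else exp (-(q - m) ^ 2 / 2)

lemma sqrt_mul_subgaussianTail {ε m q : ℝ} (hq : m ≤ q) :
    √(ε * subgaussianTail m q) = √ε * exp (-(1 / 4) * (q - m) ^ 2) := by
  rw [subgaussianTail, if_neg hq.not_gt, sqrt_mul' ε (exp_nonneg _), ← exp_half]
  ring_nf

lemma eqOn_sqrt_mul_subgaussianTail {ε a : ℝ} (ha : 0 ≤ a) (m : ℝ) :
    EqOn (fun q ↦ √(ε * subgaussianTail m q)) (fun q ↦ √ε * exp (-(1 / 4) * (q - m) ^ 2))
      (Ioi (m + a)) :=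
  fun _ hq ↦ sqrt_mul_subgaussianTail ((le_add_of_nonneg_right ha).trans (mem_Ioi.mp hq).le)

lemma integrableOn_sqrt_mul_subgaussianTail {ε a : ℝ} (ha : 0 ≤ a) (m : ℝ) :
    IntegrableOn (fun q ↦ √(ε * subgaussianTail m q)) (Ioi (m + a)) :=
  ((integrable_exp_neg_mul_sub_sq (by norm_num) m).const_mul _).integrableOn.congr_fun
    (eqOn_sqrt_mul_subgaussianTail ha m).symm measurableSet_Ioi

lemma setIntegral_sqrt_mul_subgaussianTail_le {ε a : ℝ} (ha : 0 ≤ a) (m : ℝ) :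
    ∫ q in Ioi (m + a), √(ε * subgaussianTail m q) ≤ √ε * exp (-a ^ 2 / 4) * √π := by
  have hconst : √(π / (1 / 4)) / 2 = √π := by
    rw [show π / (1 / 4) = 2 ^ 2 * π by ring, sqrt_mul (by positivity), sqrt_sq zero_le_two]
    ring
  calc ∫ q in Ioi (m + a), √(ε * subgaussianTail m q)
      = √ε * ∫ q in Ioi (m + a), exp (-(1 / 4) * (q - m) ^ 2) := by
        rw [setIntegral_congr_fun measurableSet_Ioi (eqOn_sqrt_mul_subgaussianTail ha m),
          integral_const_mul]
    _ ≤ √ε * (exp (-(1 / 4) * a ^ 2) * (√(π / (1 / 4)) / 2)) := by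
        gcongr
        exact setIntegral_Ioi_exp_neg_mul_sub_sq_le ha (by norm_num) m
    _ = √ε * exp (-a ^ 2 / 4) * √π := by
        rw [hconst]
        ring_nf

lemma errorIntegral_subgaussianTail_le {ε m : ℝ} (hε : 0 < ε) (hε₁ : ε ≤ 1) (hm : 0 ≤ m) :
    errorIntegral (subgaussianTail m) ε ≤ ε * (m + √(2 * log (1 / ε)) + √π) := by
  set a := √(2 * log (1 / ε))
  have ha : 0 ≤ a := sqrt_nonneg _
  have hlog : 0 ≤ log (1 / ε) := log_nonneg (one_le_one_div hε hε₁)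
  have hexp : exp (-a ^ 2 / 4) = √ε := by
    rw [sq_sqrt (by positivity), one_div, log_inv,
      show -(2 * -log ε) / 4 = log ε / 2 by ring, exp_half, exp_log hε]
  calc errorIntegral (subgaussianTail m) ε
      ≤ (m + a) * ε + ∫ q in Ioi (m + a), √(ε * subgaussianTail m q) :=
        errorIntegral_le_mul_add_setIntegral hε.le (by positivity)
          (integrableOn_sqrt_mul_subgaussianTail ha m)
    _ ≤ (m + a) * ε + √ε * exp (-a ^ 2 / 4) * √π := by
        gcongr
        exact setIntegral_sqrt_mul_subgaussianTail_le ha m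
    _ = ε * (m + a + √π) := by
        rw [hexp, mul_self_sqrt hε.le]
        ring

theorem subgaussian_tail_integral_general {ε₀ : ℝ} (hε₀ : ε₀ < 1) :
    ∃ C : ℝ, 0 < C ∧ ∀ ε ∈ Ioc 0 ε₀, ∀ F : ℝ → ℝ, EqOn F (subgaussianTail √ε) (Ioi 0) →
      errorIntegral F ε ≤ C * ε * √(log (1 / ε)) := by
  refine ⟨√2 + (1 + √π) / √(log (1 / ε₀)), by positivity, fun ε ⟨hε, hεε₀⟩ F hF ↦ ?_⟩
  have hε₁ : ε ≤ 1 := hεε₀.trans hε₀.le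
  have hε₀_pos : 0 < ε₀ := hε.trans_le hεε₀
  have hlog₀ : 0 < √(log (1 / ε₀)) := sqrt_pos.mpr (log_pos (one_lt_one_div hε₀_pos hε₀))
  have hlog : √(log (1 / ε₀)) ≤ √(log (1 / ε)) := by gcongr
  calc errorIntegral F ε
      = errorIntegral (subgaussianTail √ε) ε := errorIntegral_congr hF ε
    _ ≤ ε * (√ε + √(2 * log (1 / ε)) + √π) :=
        errorIntegral_subgaussianTail_le hε hε₁ (sqrt_nonneg ε)
    _ ≤ ε * (√2 * √(log (1 / ε)) + (1 + √π) * 1) := by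
        rw [sqrt_mul zero_le_two]
        refine mul_le_mul_of_nonneg_left ?_ hε.le
        linarith [sqrt_le_one.mpr hε₁]
    _ ≤ ε * (√2 * √(log (1 / ε)) + (1 + √π) * (√(log (1 / ε)) / √(log (1 / ε₀)))) := by
        gcongr
        exact (one_le_div hlog₀).mpr hlog
    _ = (√2 + (1 + √π) / √(log (1 / ε₀))) * ε * √(log (1 / ε)) := by ring

end

/-- The error integral `Q_{F,ε} = ∫₀^∞ min(ε, √(ε F(q))) dq` for the subgaussian tail-bound
function (with mean at most `√ε`) is `O(ε·√(log(1/ε)))`. -/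
theorem subgaussian_tail_integral :
    ∃ C ε₀ : ℝ, 0 < C ∧ ε₀ ∈ Set.Ioo (0 : ℝ) 1 ∧
      ∀ ε : ℝ, ε ∈ Set.Ioo (0 : ℝ) ε₀ →
      ∀ F : ℝ → ℝ,
        (∀ q : ℝ, 0 ≤ q →
          F q = if q < Real.sqrt ε then 1
            else Real.exp (-(q - Real.sqrt ε) ^ 2 / 2)) →
        ∫ q in Set.Ioi (0 : ℝ), min ε (Real.sqrt (ε * F q)) ≤
          C * ε * Real.sqrt (Real.log (1 / ε)) := by
  obtain ⟨C, hC, hbound⟩ := subgaussian_tail_integral_general one_half_lt_one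
  exact ⟨C, 1 / 2, hC, by norm_num, fun ε hε F hF ↦
    hbound ε (Set.Ioo_subset_Ioc_self hε) F fun q hq ↦ hF q (Set.mem_Ioi.mp hq).le⟩
end

section
/- There exists a universal constant κ > 0 such that for all positive integers m < T the following holds. For n = m, m+1, …, T let v_n ∈ ℝ^m be the vector whose j-th entry is 1/(n − j + 1), i.e., v_n = (1/n, 1/(n−1), …, 1/(n−m+1)). Then the m×m positive semidefinite matrix Σ_{n=m}^{T} v_n v_nᵀ satisfies Σ_{n=m}^{T} v_n v_nᵀ ≼ κ·I_m in the positive semidefinite (Loewner) order. -/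
open scoped BigOperators

/-!
Write an index of the sum as `n = m + i` and reverse the coordinates by `j ↦ m - 1 - j`. The entry
`1 / (n - j)` becomes the Hilbert kernel `1 / (i + j + 1)`, so the quadratic form of the sum of the
outer products at `x` is the squared `ℓ²` norm of a truncation of the Hilbert matrix applied to `x`,
and Hilbert's inequality bounds it independently of the truncation. Hilbert's inequality itself is
Schur's test with the weights `1 / √(i + 1/2)`, for which the kernel splits symmetrically as
`1 / ((i + 1/2) + (j + 1/2))`.
-/

theorem sum_sq_sum_mul_le_of_schur_test {R ι κ : Type*} [Field R] [LinearOrder R]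
    [IsStrictOrderedRing R] {s : Finset ι} {t : Finset κ} {K : ι → κ → R} {p : ι → R} {q : κ → R}
    {A B : R} (hA : 0 ≤ A) (hK : ∀ i ∈ s, ∀ j ∈ t, 0 ≤ K i j) (hq : ∀ j ∈ t, 0 < q j)
    (hrow : ∀ i ∈ s, ∑ j ∈ t, K i j * q j ≤ A * p i)
    (hcol : ∀ j ∈ t, ∑ i ∈ s, K i j * p i ≤ B * q j) (x : κ → R) :
    ∑ i ∈ s, (∑ j ∈ t, K i j * x j) ^ 2 ≤ A * B * ∑ j ∈ t, x j ^ 2 := by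
  have weighted_nonneg : ∀ i ∈ s, ∀ j ∈ t, 0 ≤ K i j * (x j ^ 2 / q j) := fun i hi j hj =>
    mul_nonneg (hK i hi j hj) (div_nonneg (sq_nonneg _) (hq j hj).le)
  have cauchy_schwarz : ∀ i ∈ s, (∑ j ∈ t, K i j * x j) ^ 2 ≤
      (∑ j ∈ t, K i j * q j) * ∑ j ∈ t, K i j * (x j ^ 2 / q j) := fun i hi =>
    Finset.sum_sq_le_sum_mul_sum_of_sq_le_mul t
      (fun j hj => mul_nonneg (hK i hi j hj) (hq j hj).le) (weighted_nonneg i hi) fun j hj => by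
        have := (hq j hj).ne'
        exact le_of_eq (by field_simp)
  calc ∑ i ∈ s, (∑ j ∈ t, K i j * x j) ^ 2
      ≤ ∑ i ∈ s, A * p i * ∑ j ∈ t, K i j * (x j ^ 2 / q j) :=
        Finset.sum_le_sum fun i hi => (cauchy_schwarz i hi).trans <|
          mul_le_mul_of_nonneg_right (hrow i hi) (Finset.sum_nonneg (weighted_nonneg i hi))
    _ = ∑ j ∈ t, A * (x j ^ 2 / q j) * ∑ i ∈ s, K i j * p i := by
        simp only [Finset.mul_sum]
        rw [Finset.sum_comm]
        exact Finset.sum_congr rfl fun j _ => Finset.sum_congr rfl fun i _ => by ring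
    _ ≤ ∑ j ∈ t, A * (x j ^ 2 / q j) * (B * q j) :=
        Finset.sum_le_sum fun j hj => mul_le_mul_of_nonneg_left (hcol j hj) <|
          mul_nonneg hA (div_nonneg (sq_nonneg _) (hq j hj).le)
    _ = A * B * ∑ j ∈ t, x j ^ 2 := by
        rw [Finset.mul_sum]
        refine Finset.sum_congr rfl fun j hj => ?_
        have := (hq j hj).ne'
        field_simp

/- The function `4 / √a * (√x / (√x + √a))` is an algebraic substitute for the antiderivative
`2 / √a * arctan √(x / a)` of `1 / ((x + a) * √x)`: its increments are reciprocals of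
products, each factor of which can be compared with the midpoint value `√(x + 1 / 2)`. -/
lemma one_div_add_mul_sqrt_le_sub {a x : ℝ} (ha : 0 < a) (hx : 0 ≤ x) :
    1 / ((x + 1 / 2 + a) * √(x + 1 / 2)) ≤
      4 / √a * (√(x + 1) / (√(x + 1) + √a)) - 4 / √a * (√x / (√x + √a)) := by
  have hr : 0 < √a := Real.sqrt_pos.2 ha
  have hr2 : √a ^ 2 = a := Real.sq_sqrt ha.le
  have ht : 0 ≤ √x := Real.sqrt_nonneg x
  have ht2 : √x ^ 2 = x := Real.sq_sqrt hx
  have hs : 0 < √(x + 1) := Real.sqrt_pos.2 (by positivity)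
  have hs2 : √(x + 1) ^ 2 = x + 1 := Real.sq_sqrt (by positivity)
  have hu : 0 < √(x + 1 / 2) := Real.sqrt_pos.2 (by positivity)
  have hu2 : √(x + 1 / 2) ^ 2 = x + 1 / 2 := Real.sq_sqrt (by positivity)
  generalize √a = r at *
  generalize √x = t at *
  generalize √(x + 1) = s at *
  generalize √(x + 1 / 2) = u at *
  have add_le : s + t ≤ 2 * u :=
    abs_le_of_sq_le_sq' (by nlinarith [sq_nonneg (s - t)]) (by positivity) |>.2
  have mul_le : (s + r) * (t + r) ≤ 2 * (x + 1 / 2 + a) := by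
    have st_le : s * t ≤ u ^ 2 := by linarith [two_mul_le_add_sq s t]
    calc (s + r) * (t + r) = s * t + (s + t) * r + r ^ 2 := by ring
      _ ≤ u ^ 2 + 2 * u * r + r ^ 2 := by gcongr
      _ = (u + r) ^ 2 := by ring
      _ ≤ 2 * (u ^ 2 + r ^ 2) := add_sq_le
      _ = 2 * (x + 1 / 2 + a) := by rw [hu2, hr2]
  have increment :
      4 / r * (s / (s + r)) - 4 / r * (t / (t + r)) = 4 / ((s + t) * ((s + r) * (t + r))) := by
    have : (s - t) * (s + t) = 1 := by linear_combination hs2 - ht2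
    field_simp
    linear_combination r * this
  rw [increment, div_le_div_iff₀ (by positivity) (by positivity)]
  linarith [mul_le_mul add_le mul_le (by positivity) (by positivity)]

lemma sum_one_div_add_mul_sqrt_le {a : ℝ} (ha : 0 < a) (s : Finset ℕ) :
    ∑ i ∈ s, 1 / (((i : ℝ) + 1 / 2 + a) * √((i : ℝ) + 1 / 2)) ≤ 4 / √a := by
  obtain ⟨N, hN⟩ := s.exists_nat_subset_range
  let F : ℕ → ℝ := fun i => 4 / √a * (√(i : ℝ) / (√(i : ℝ) + √a))
  calc ∑ i ∈ s, 1 / (((i : ℝ) + 1 / 2 + a) * √((i : ℝ) + 1 / 2))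
      ≤ ∑ i ∈ Finset.range N, 1 / (((i : ℝ) + 1 / 2 + a) * √((i : ℝ) + 1 / 2)) :=
        Finset.sum_le_sum_of_subset_of_nonneg hN fun i _ _ => by positivity
    _ ≤ ∑ i ∈ Finset.range N, (F (i + 1) - F i) := Finset.sum_le_sum fun i _ => by
        simpa only [F, Nat.cast_add_one] using one_div_add_mul_sqrt_le_sub ha i.cast_nonneg
    _ = F N := by rw [Finset.sum_range_sub]; simp [F]
    _ ≤ 4 / √a := mul_le_of_le_one_right (by positivity) <|
        div_le_one_of_le₀ (le_add_of_nonneg_right (Real.sqrt_nonneg a)) (by positivity)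

/-- The optimal constant in place of `4` is `π`. -/
theorem hilbert_inequality (s t : Finset ℕ) (x : ℕ → ℝ) :
    ∑ i ∈ s, (∑ j ∈ t, x j / ((i : ℝ) + j + 1)) ^ 2 ≤ 4 ^ 2 * ∑ j ∈ t, x j ^ 2 := by
  have weighted_sum_le (r : Finset ℕ) (k : ℕ) :
      ∑ i ∈ r, 1 / ((k : ℝ) + i + 1) * (1 / √((i : ℝ) + 1 / 2)) ≤
        4 * (1 / √((k : ℝ) + 1 / 2)) := by
    have split_kernel (i : ℕ) : (k : ℝ) + i + 1 = i + 1 / 2 + (k + 1 / 2) := by ring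
    simp only [one_div_mul_one_div, split_kernel]
    exact (sum_one_div_add_mul_sqrt_le (by positivity) r).trans_eq (mul_one_div _ _).symm
  have schur := sum_sq_sum_mul_le_of_schur_test (K := fun i j : ℕ => 1 / ((i : ℝ) + j + 1))
    (by norm_num) (fun i _ j _ => by positivity) (fun j _ => by positivity)
    (fun i _ => weighted_sum_le t i)
    (fun j _ => by simpa only [add_comm (j : ℝ)] using weighted_sum_le s j) x
  simpa only [one_div_mul_eq_div, ← sq] using schur

lemma sum_Icc_sq_sum_div_sub_le (m T : ℕ) (x : ℕ → ℝ) :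
    ∑ n ∈ Finset.Icc m T, (∑ j ∈ Finset.range m, x j / ((n : ℝ) - j)) ^ 2 ≤
      4 ^ 2 * ∑ j ∈ Finset.range m, x j ^ 2 := by
  have reflect_kernel (i : ℕ) : ∑ j ∈ Finset.range m, x j / (((m + i : ℕ) : ℝ) - j) =
      ∑ j ∈ Finset.range m, x (m - 1 - j) / ((i : ℝ) + j + 1) := by
    rw [← Finset.sum_range_reflect]
    refine Finset.sum_congr rfl fun j hj => ?_
    obtain ⟨k, rfl⟩ := Nat.exists_eq_add_of_lt (Finset.mem_range.1 hj)
    congr 1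
    rw [show j + k + 1 - 1 - j = k by omega]
    push_cast
    ring
  rw [← Finset.Ico_add_one_right_eq_Icc, Finset.sum_Ico_eq_sum_range]
  simp only [reflect_kernel]
  rw [← Finset.sum_range_reflect (fun j => x j ^ 2)]
  exact hilbert_inequality _ _ fun j => x (m - 1 - j)

lemma posSemidef_smul_one_sub_sum_vecMulVec_iff {ι n : Type*} [Fintype n] [DecidableEq n]
    (s : Finset ι) (v : ι → n → ℝ) (c : ℝ) :
    (c • (1 : Matrix n n ℝ) - ∑ i ∈ s, Matrix.vecMulVec (v i) (v i)).PosSemidef ↔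
      ∀ x : n → ℝ, ∑ i ∈ s, (v i ⬝ᵥ x) ^ 2 ≤ c * ∑ j, x j ^ 2 := by
  have isHermitian : (c • (1 : Matrix n n ℝ) - ∑ i ∈ s, Matrix.vecMulVec (v i) (v i)).IsHermitian :=
    (Matrix.isHermitian_one.smul (.all c)).sub <| isSelfAdjoint_sum s fun i _ =>
      (Matrix.posSemidef_vecMulVec_self_star (v i)).isHermitian
  have quadratic_form (x : n → ℝ) :
      star x ⬝ᵥ ((c • (1 : Matrix n n ℝ) - ∑ i ∈ s, Matrix.vecMulVec (v i) (v i)).mulVec x) =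
        c * ∑ j, x j ^ 2 - ∑ i ∈ s, (v i ⬝ᵥ x) ^ 2 := by
    have rank_one (i : ι) : x ⬝ᵥ (Matrix.vecMulVec (v i) (v i)).mulVec x = (v i ⬝ᵥ x) ^ 2 := by
      rw [Matrix.vecMulVec_mulVec, dotProduct_smul, op_smul_eq_mul, dotProduct_comm x, sq]
    have norm_sq : x ⬝ᵥ x = ∑ j, x j ^ 2 := by simp only [dotProduct, sq]
    rw [star_trivial, Matrix.sub_mulVec, Matrix.smul_mulVec, Matrix.one_mulVec, Matrix.sum_mulVec,
      dotProduct_sub, dotProduct_smul, dotProduct_sum, smul_eq_mul, norm_sq]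
    simp only [rank_one]
  simp only [Matrix.posSemidef_iff_dotProduct_mulVec, isHermitian, true_and, quadratic_form,
    sub_nonneg]

/-- The sum of the outer products of the vectors
`v_n = (1/n, 1/(n-1), …, 1/(n-m+1))`, `n = m, …, T`, is bounded above by a universal constant
multiple of the identity in the Loewner (positive semidefinite) order. -/
theorem outer_product_sum_bounded :
    ∃ κ : ℝ, 0 < κ ∧
      ∀ m T : ℕ, 0 < m → m < T →
        (κ • (1 : Matrix (Fin m) (Fin m) ℝ) -
          ∑ n ∈ Finset.Icc m T,
            Matrix.vecMulVec (fun j : Fin m => 1 / ((n : ℝ) - (j : ℕ)))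
              (fun j : Fin m => 1 / ((n : ℝ) - (j : ℕ)))).PosSemidef := by
  refine ⟨4 ^ 2, by norm_num, fun m T _ _ => ?_⟩
  rw [posSemidef_smul_one_sub_sum_vecMulVec_iff]
  intro x
  obtain ⟨y, rfl⟩ : ∃ y : ℕ → ℝ, y ∘ Fin.val = x :=
    ⟨Function.extend Fin.val x 0, Function.extend_comp Fin.val_injective x 0⟩
  simpa only [dotProduct, Function.comp_apply, one_div_mul_eq_div, Finset.sum_range] using
    sum_Icc_sq_sum_div_sub_le m T y
end

section
/- There exists a universal constant C > 0 such that for every positive integer N, the N×N symmetric matrix A′ with entries A′_{i,j} = 1/max(i, j) has operator norm (largest eigenvalue) at most C. -/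
/-!
Let `C` be the Cesàro matrix, which sends a sequence to its running averages. With indices
starting at `1`, the identity `1 / max i j = min i j / (i * j)` says that `C * Cᴴ` has entries
`1 / max i j`. These are also the entries of `C + Cᴴ` away from the diagonal, so
`(1 - C) * (1 - C)ᴴ = 1 - C - Cᴴ + C * Cᴴ` is diagonal, with entries `1 - 1 / i` in `[0, 1)`.
The C⋆-identity gives `‖1 - C‖ ≤ 1`, hence `‖C‖ ≤ 2` (Hardy's inequality in `ℓ²`), and
`‖C * Cᴴ‖ = ‖C‖ ^ 2 ≤ 4`.
-/

open Matrix
open scoped Matrix.Norms.L2Operator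

/-- The matrix of the Cesàro averaging operator on sequences of length `N`. The indices of
`Fin N` start at `0`, so row `i` averages the first `i + 1` entries. -/
def cesaroMatrix (K : Type*) [DivisionSemiring K] (N : ℕ) : Matrix (Fin N) (Fin N) K :=
  of fun i j => if j ≤ i then ((i + 1 : ℕ) : K)⁻¹ else 0

section DivisionSemiring

variable {K : Type*} [DivisionSemiring K] {N : ℕ}

theorem cesaroMatrix_apply (i j : Fin N) :
    cesaroMatrix K N i j = if j ≤ i then ((i + 1 : ℕ) : K)⁻¹ else 0 :=
  rfl

theorem cesaroMatrix_conjTranspose_apply [StarRing K] (i j : Fin N) :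
    (cesaroMatrix K N)ᴴ i j = if i ≤ j then ((j + 1 : ℕ) : K)⁻¹ else 0 := by
  simp [cesaroMatrix_apply, apply_ite star]

end DivisionSemiring

section Semifield

variable {K : Type*} [Semifield K] [CharZero K]

theorem natCast_min_mul_inv_mul_inv {m n : ℕ} (hm : m ≠ 0) (hn : n ≠ 0) :
    ((min m n : ℕ) : K) * ((m : K)⁻¹ * (n : K)⁻¹) = 1 / ((max m n : ℕ) : K) := by
  have natCast_max_ne_zero : ((max m n : ℕ) : K) ≠ 0 := by
    rw [Nat.cast_ne_zero]
    lia
  have natCast_min_mul_max : ((min m n : ℕ) : K) * ((max m n : ℕ) : K) = m * n := by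
    rw [← Nat.cast_mul, min_mul_max, Nat.cast_mul]
  field_simp
  exact natCast_min_mul_max

variable [StarRing K] {N : ℕ}

theorem cesaroMatrix_mul_conjTranspose :
    cesaroMatrix K N * (cesaroMatrix K N)ᴴ =
      of fun i j : Fin N => 1 / ((max ((i : ℕ) + 1) ((j : ℕ) + 1) : ℕ) : K) := by
  ext i j
  calc (cesaroMatrix K N * (cesaroMatrix K N)ᴴ) i j
      = ∑ k, if k ≤ min i j then ((i + 1 : ℕ) : K)⁻¹ * ((j + 1 : ℕ) : K)⁻¹ else 0 := by
        simp only [mul_apply, cesaroMatrix_apply, cesaroMatrix_conjTranspose_apply,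
          ite_zero_mul_ite_zero, le_min_iff]
    _ = ((min (i + 1) (j + 1) : ℕ) : K) * (((i + 1 : ℕ) : K)⁻¹ * ((j + 1 : ℕ) : K)⁻¹) := by
        rw [← Finset.sum_filter, Finset.filter_ge_eq_Iic, Finset.sum_const, Fin.card_Iic,
          Fin.coe_min, ← Nat.add_min_add_right, nsmul_eq_mul]
    _ = 1 / ((max (i + 1) (j + 1) : ℕ) : K) :=
        natCast_min_mul_inv_mul_inv (Nat.succ_ne_zero i) (Nat.succ_ne_zero j)

theorem cesaroMatrix_add_conjTranspose :
    cesaroMatrix K N + (cesaroMatrix K N)ᴴ =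
      cesaroMatrix K N * (cesaroMatrix K N)ᴴ +
        diagonal fun i : Fin N => ((i + 1 : ℕ) : K)⁻¹ := by
  rw [cesaroMatrix_mul_conjTranspose]
  ext i j
  simp only [Matrix.add_apply, cesaroMatrix_apply, cesaroMatrix_conjTranspose_apply, of_apply,
    one_div]
  rcases lt_trichotomy i j with h | rfl | h
  · simp [h.le, h.not_ge, h.ne]
  · simp
  · simp [h.le, h.not_ge, h.ne']

end Semifield

theorem one_sub_cesaroMatrix_mul_conjTranspose {K : Type*} [Field K] [CharZero K] [StarRing K]
    {N : ℕ} :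
    (1 - cesaroMatrix K N) * (1 - cesaroMatrix K N)ᴴ =
      diagonal fun i : Fin N => 1 - ((i + 1 : ℕ) : K)⁻¹ := by
  calc (1 - cesaroMatrix K N) * (1 - cesaroMatrix K N)ᴴ
      = 1 - (cesaroMatrix K N + (cesaroMatrix K N)ᴴ - cesaroMatrix K N * (cesaroMatrix K N)ᴴ) := by
        rw [conjTranspose_sub, conjTranspose_one]
        noncomm_ring
    _ = 1 - diagonal fun i : Fin N => ((i + 1 : ℕ) : K)⁻¹ := by
        rw [cesaroMatrix_add_conjTranspose, add_sub_cancel_left]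
    _ = diagonal fun i : Fin N => 1 - ((i + 1 : ℕ) : K)⁻¹ := by
        rw [← diagonal_one, diagonal_sub]

section L2Norm

variable (𝕜 : Type*) [RCLike 𝕜] (N : ℕ)

theorem l2_opNorm_one_sub_cesaroMatrix_le : ‖1 - cesaroMatrix 𝕜 N‖ ≤ 1 := by
  have norm_entry_le (i : Fin N) : ‖1 - ((i + 1 : ℕ) : 𝕜)⁻¹‖ ≤ 1 := by
    have inv_le_one : ((i + 1 : ℕ) : ℝ)⁻¹ ≤ 1 := Nat.cast_inv_le_one _
    have inv_nonneg : 0 ≤ ((i + 1 : ℕ) : ℝ)⁻¹ := by positivity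
    calc ‖1 - ((i + 1 : ℕ) : 𝕜)⁻¹‖ = ‖((1 - ((i + 1 : ℕ) : ℝ)⁻¹ : ℝ) : 𝕜)‖ := by push_cast; rfl
      _ = 1 - ((i + 1 : ℕ) : ℝ)⁻¹ := RCLike.norm_of_nonneg (sub_nonneg.mpr inv_le_one)
      _ ≤ 1 := sub_le_self 1 inv_nonneg
  rw [← sq_le_one_iff₀ (norm_nonneg _), sq, ← CStarRing.norm_self_mul_star, star_eq_conjTranspose,
    one_sub_cesaroMatrix_mul_conjTranspose, l2_opNorm_diagonal]
  exact (pi_norm_le_iff_of_nonneg zero_le_one).mpr norm_entry_le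

theorem l2_opNorm_cesaroMatrix_le : ‖cesaroMatrix 𝕜 N‖ ≤ 2 := by
  have norm_one_le : ‖(1 : Matrix (Fin N) (Fin N) 𝕜)‖ ≤ 1 := by
    rw [← diagonal_one, l2_opNorm_diagonal]
    exact (pi_norm_le_iff_of_nonneg zero_le_one).mpr fun _ => norm_one.le
  calc ‖cesaroMatrix 𝕜 N‖ = ‖1 - (1 - cesaroMatrix 𝕜 N)‖ := by rw [sub_sub_cancel]
    _ ≤ ‖(1 : Matrix (Fin N) (Fin N) 𝕜)‖ + ‖1 - cesaroMatrix 𝕜 N‖ := norm_sub_le _ _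
    _ ≤ 1 + 1 := add_le_add norm_one_le (l2_opNorm_one_sub_cesaroMatrix_le 𝕜 N)
    _ = 2 := one_add_one_eq_two

theorem l2_opNorm_one_div_max_le :
    ‖of fun i j : Fin N => 1 / ((max ((i : ℕ) + 1) ((j : ℕ) + 1) : ℕ) : 𝕜)‖ ≤ 4 := by
  rw [← cesaroMatrix_mul_conjTranspose, ← star_eq_conjTranspose, CStarRing.norm_self_mul_star]
  calc ‖cesaroMatrix 𝕜 N‖ * ‖cesaroMatrix 𝕜 N‖ ≤ 2 * 2 := by
        gcongr <;> exact l2_opNorm_cesaroMatrix_le 𝕜 N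
    _ = 4 := by norm_num

end L2Norm

/-- The `N×N` matrix with entries `1/max(i,j)` (indices `1, …, N`) has operator norm bounded
by a universal constant: its action on Euclidean space satisfies `‖A'v‖ ≤ C‖v‖` for all `v`. -/
theorem inv_max_matrix_norm_bounded :
    ∃ C : ℝ, 0 < C ∧
      ∀ N : ℕ, 0 < N →
        ∀ v : EuclideanSpace ℝ (Fin N),
          ‖Matrix.toEuclideanLin
              (Matrix.of fun i j : Fin N =>
                (1 : ℝ) / ((max ((i : ℕ) + 1) ((j : ℕ) + 1) : ℕ) : ℝ)) v‖ ≤ C * ‖v‖ := by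
  refine ⟨4, four_pos, fun N _ v => (l2_opNorm_mulVec _ v).trans ?_⟩
  gcongr
  exact l2_opNorm_one_div_max_le ℝ N
end

section
/- Let U be an integrable real random variable, let L > 0 and let m be a positive integer, and set q_i = i·L/m for i = 1, …, m. Then |E[U] − (Σ_{i=1}^{m} P(U ≥ q_i)·L/m − Σ_{i=1}^{m} P(U ≤ −q_i)·L/m)| ≤ 2L/m + ∫_L^∞ P(U ≥ q) dq + ∫_L^∞ P(U ≤ −q) dq. -/
open scoped BigOperators
open MeasureTheory

/-!
Split `U` into its positive and negative parts. By the layer cake formula the positive part has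
integral `∫₀^∞ P(U ≥ q) dq`, whose integrand is antitone and bounded by the total mass, so the right
Riemann sum with step `δ` underestimates the truncated integral by at most `δ` times the total mass.
The two one-sided errors are both nonnegative and enter with opposite signs, so the total error is
at most the larger of the two.
-/

section RiemannSum

variable {f : ℝ → ℝ} {n : ℕ}

lemma integral_sub_sum_mem_Icc_of_antitoneOn (hf : AntitoneOn f (Set.Icc 0 n)) :
    (∫ x in (0 : ℝ)..n, f x) - ∑ i ∈ Finset.Icc 1 n, f i ∈ Set.Icc 0 (f 0 - f n) := by
  have hf' : AntitoneOn f (Set.Icc ((0 : ℕ) : ℝ) n) := by simpa using hf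
  have hlower := hf'.sum_le_integral_Ico n.zero_le
  have hupper := hf'.integral_le_sum_Ico n.zero_le
  have hshift : ∑ i ∈ Finset.Ico 0 n, f ↑(i + 1) = ∑ i ∈ Finset.Icc 1 n, f i :=
    Finset.sum_Ico_add' (fun i : ℕ => f i) 0 n 1
  have htelescope : ∑ i ∈ Finset.Ico 0 n, f i + f n =
      ∑ i ∈ Finset.Ico 0 n, f ↑(i + 1) + f (0 : ℕ) := by
    rw [Nat.Ico_zero_eq_range]
    exact (Finset.sum_range_succ _ n).symm.trans (Finset.sum_range_succ' _ n)
  rw [Nat.cast_zero] at hlower hupper htelescope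
  constructor <;> linarith

lemma integral_sub_rightRiemannSum_mem_Icc_of_antitoneOn {a δ : ℝ} (hδ : 0 ≤ δ)
    (hf : AntitoneOn f (Set.Icc a (a + δ * n))) :
    (∫ x in a..a + δ * n, f x) - ∑ i ∈ Finset.Icc 1 n, f (a + δ * i) * δ ∈
      Set.Icc 0 ((f a - f (a + δ * n)) * δ) := by
  have hrescaled : AntitoneOn (fun x => f (a + δ * x)) (Set.Icc 0 n) := by
    refine hf.comp_MonotoneOn (fun x _ y _ hxy => by gcongr) fun x ⟨hx0, hxn⟩ => ?_
    exact ⟨le_add_of_nonneg_right (by positivity), by gcongr⟩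
  have hscale : (∫ x in (0 : ℝ)..n, f (a + δ * x)) * δ = ∫ x in a..a + δ * n, f x := by
    refine (mul_comm _ δ).trans ?_
    simpa only [smul_eq_mul, mul_zero, add_zero] using
      intervalIntegral.smul_integral_comp_add_mul (a := 0) (b := n) f δ a
  obtain ⟨hlower, hupper⟩ := integral_sub_sum_mem_Icc_of_antitoneOn hrescaled
  rw [← hscale, ← Finset.sum_mul, ← sub_mul]
  rw [mul_zero, add_zero] at hupper
  exact ⟨mul_nonneg hlower hδ, mul_le_mul_of_nonneg_right hupper hδ⟩

end RiemannSum

section LayerCake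

lemma setOf_le_max_of_lt {α β : Type*} [LinearOrder β] {f : α → β} {a q : β} (haq : a < q) :
    {x | q ≤ max (f x) a} = {x | q ≤ f x} := by
  simp only [le_max_iff, haq.not_ge, or_false]

variable {Ω : Type*} [MeasurableSpace Ω] {μ : Measure Ω} {f : Ω → ℝ}

lemma antitone_measureReal_setOf_le {β : Type*} [Preorder β] [IsFiniteMeasure μ] (g : Ω → β) :
    Antitone fun q => μ.real {ω | q ≤ g ω} :=
  fun _ _ hab => measureReal_mono fun _ hω => hab.trans hω

lemma integrableOn_measureReal_setOf_le (hf : Integrable f μ) :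
    IntegrableOn (fun q => μ.real {ω | q ≤ f ω}) (Set.Ioi 0) := by
  have hanti : Antitone fun q => μ {ω | q ≤ f ω} :=
    fun _ _ hab => measure_mono fun _ hω => hab.trans hω
  refine integrable_toReal_of_lintegral_ne_top hanti.measurable.aemeasurable ?_
  have hlayer := lintegral_eq_lintegral_meas_le μ
    (.of_forall fun ω => le_max_right (f ω) 0) hf.pos_part.aemeasurable
  rw [setLIntegral_congr_fun measurableSet_Ioi
    fun q hq => congrArg μ (setOf_le_max_of_lt hq)] at hlayer
  exact hlayer ▸ hf.pos_part.lintegral_lt_top.ne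

lemma integral_max_zero_eq_integral_measureReal (hf : Integrable f μ) :
    ∫ ω, max (f ω) 0 ∂μ = ∫ q in Set.Ioi 0, μ.real {ω | q ≤ f ω} := by
  rw [hf.pos_part.integral_eq_integral_meas_le (.of_forall fun ω => le_max_right (f ω) 0)]
  exact setIntegral_congr_fun measurableSet_Ioi fun q hq => congrArg μ.real (setOf_le_max_of_lt hq)

lemma integral_max_zero_sub_sum_measureReal_mem_Icc [IsFiniteMeasure μ] (hf : Integrable f μ)
    {δ : ℝ} (hδ : 0 ≤ δ) (n : ℕ) :
    (∫ ω, max (f ω) 0 ∂μ) - ∑ i ∈ Finset.Icc 1 n, μ.real {ω | δ * i ≤ f ω} * δ ∈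
      Set.Icc 0 (μ.real Set.univ * δ + ∫ q in Set.Ioi (δ * n), μ.real {ω | q ≤ f ω}) := by
  set F : ℝ → ℝ := fun q => μ.real {ω | q ≤ f ω}
  have hF_int : IntegrableOn F (Set.Ioi 0) := integrableOn_measureReal_setOf_le hf
  have hsplit : ∫ ω, max (f ω) 0 ∂μ =
      (∫ q in (0 : ℝ)..δ * n, F q) + ∫ q in Set.Ioi (δ * n), F q := by
    rw [integral_max_zero_eq_integral_measureReal hf, intervalIntegral.integral_interval_add_Ioi
      hF_int (hF_int.mono_set (Set.Ioi_subset_Ioi (by positivity)))]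
  have htail : 0 ≤ ∫ q in Set.Ioi (δ * n), F q := by positivity
  have hdrop : (F 0 - F (δ * n)) * δ ≤ μ.real Set.univ * δ := by
    gcongr
    exact (sub_le_self _ measureReal_nonneg).trans (measureReal_mono (Set.subset_univ _))
  obtain ⟨hlower, hupper⟩ := integral_sub_rightRiemannSum_mem_Icc_of_antitoneOn (a := 0) (n := n) hδ
    ((antitone_measureReal_setOf_le f).antitoneOn _ : AntitoneOn F _)
  simp only [zero_add] at hlower hupper
  rw [hsplit]
  constructor <;> linarith

end LayerCake

theorem mean_riemann_sum_approx_general {Ω : Type*} [MeasurableSpace Ω] {μ : Measure Ω}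
    [IsFiniteMeasure μ] {U : Ω → ℝ} (hU : Integrable U μ) {L : ℝ} (hL : 0 ≤ L) {m : ℕ}
    (hm : 0 < m) :
    |(∫ ω, U ω ∂μ) -
        ((∑ i ∈ Finset.Icc 1 m, μ.real {ω | i * L / m ≤ U ω} * (L / m)) -
          ∑ i ∈ Finset.Icc 1 m, μ.real {ω | U ω ≤ -(i * L / m)} * (L / m))| ≤
      μ.real Set.univ * (L / m) +
        max (∫ q in Set.Ioi L, μ.real {ω | q ≤ U ω}) (∫ q in Set.Ioi L, μ.real {ω | U ω ≤ -q}) := by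
  have hstep : 0 ≤ L / m := by positivity
  have hgrid (i : ℕ) : L / m * i = i * L / m := by ring
  have hend : m * L / m = L := by field_simp
  have hpos := integral_max_zero_sub_sum_measureReal_mem_Icc hU hstep m
  have hneg := integral_max_zero_sub_sum_measureReal_mem_Icc hU.neg hstep m
  simp only [hgrid, hend, Pi.neg_apply, le_neg (b := U _)] at hpos hneg
  have hmean : ∫ ω, U ω ∂μ = (∫ ω, max (U ω) 0 ∂μ) - ∫ ω, max (-U ω) 0 ∂μ := by
    simpa only [Real.coe_toNNReal'] using integral_eq_integral_pos_part_sub_integral_neg_part hU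
  rw [hmean, sub_sub_sub_comm, ← max_add_add_left]
  exact abs_sub_le_of_nonneg_of_le hpos.1 (hpos.2.trans (le_max_left _ _)) hneg.1
    (hneg.2.trans (le_max_right _ _))

/-- Truncated Riemann-sum approximation of the mean via
`E[U] = ∫₀^∞ P(U ≥ q) dq − ∫₀^∞ P(U ≤ −q) dq`: the right Riemann sums on the grid
`qᵢ = i·L/m` approximate `E[U]` up to `2L/m` plus the two tail integrals beyond `L`. -/
theorem mean_riemann_sum_approx (Ω : Type*) [MeasurableSpace Ω] (P : Measure Ω)
    [IsProbabilityMeasure P] (U : Ω → ℝ) (hU : Measurable U) (hInt : Integrable U P)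
    (L : ℝ) (hL : 0 < L) (m : ℕ) (hm : 0 < m) :
    |(∫ ω, U ω ∂P) -
        ((∑ i ∈ Finset.Icc 1 m, (P {ω | (i : ℝ) * L / m ≤ U ω}).toReal * (L / m)) -
          ∑ i ∈ Finset.Icc 1 m, (P {ω | U ω ≤ -((i : ℝ) * L / m)}).toReal * (L / m))| ≤
      2 * L / m +
        (∫ q in Set.Ioi L, (P {ω | q ≤ U ω}).toReal) +
        (∫ q in Set.Ioi L, (P {ω | U ω ≤ -q}).toReal) := by
  refine (mean_riemann_sum_approx_general hInt hL.le hm).trans ?_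
  grw [max_le_add_of_nonneg (by positivity) (by positivity), probReal_univ, mul_div_assoc,
    ← add_assoc, one_le_two]
  rfl
end
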